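/- Let f and f′ be admissible 6-tuples such that f=h(f′) for some h∈H=⟨ψ₁,ψ₂,ψ₃⟩. Then there exist h′∈H′=⟨ψ₂,ψ₃⟩ and e∈{0,1,2} such that σ(f)=h′(σ(ψ₁^e(f′))); in particular σ(f) is H′-equivalent (and hence H-equivalent) to one of σ(f′), σ(ψ₁(f′)), σ(ψ₁²(f′)). -/

import Mathlib

/-!
Common setup: 6-tuples, the coloured graph Γ(f), conditions (I)–(VI),
the maps ψ₁, ψ₂, ψ₃, σ, equivalences, traps, canonical/minimal/root tuples.
-/

namespace GMN

/-- A 6-tuple `(h₀,h₁,h₂;q₀,q₁,q₂)` of integers. -/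
structure Tuple where
  h0 : ℤ
  h1 : ℤ
  h2 : ℤ
  q0 : ℤ
  q1 : ℤ
  q2 : ℤ

namespace Tuple

/-- The `h`-components indexed by `ℤ₃`. -/
def h (f : Tuple) : ZMod 3 → ℤ := fun i => if i = 0 then f.h0 else if i = 1 then f.h1 else f.h2

/-- The `q`-components indexed by `ℤ₃`. -/
def q (f : Tuple) : ZMod 3 → ℤ := fun i => if i = 0 then f.q0 else if i = 1 then f.q1 else f.q2

/-- `2lᵢ = h_{i-1} + hᵢ`. -/
def twol (f : Tuple) (i : ZMod 3) : ℤ := f.h (i - 1) + f.h i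

end Tuple

/-- Condition (I): all `hᵢ` positive. -/
def CondI (f : Tuple) : Prop := ∀ i, 0 < f.h i

/-- Condition (II): all `hᵢ` of the same parity. -/
def CondII (f : Tuple) : Prop := ∀ i j, f.h i % 2 = f.h j % 2

/-- Condition (III): `0 ≤ qᵢ < 2lᵢ`. -/
def CondIII (f : Tuple) : Prop := ∀ i, 0 ≤ f.q i ∧ f.q i < f.twol i

/-- Condition (IV): all `qᵢ` of the same parity. -/
def CondIV (f : Tuple) : Prop := ∀ i j, f.q i % 2 = f.q j % 2

/-- Conditions (I)–(IV) together. -/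
def CondsI_IV (f : Tuple) : Prop := CondI f ∧ CondII f ∧ CondIII f ∧ CondIV f

/-- Condition (V): `hᵢ + qᵢ` odd. -/
def CondV (f : Tuple) : Prop := ∀ i, (f.h i + f.q i) % 2 = 1

/-- The vertex set `V(f) = ⋃ᵢ {i} × ℤ_{2lᵢ}`, with second coordinates as least
nonnegative residues. -/
def Vtx (f : Tuple) : Set (ZMod 3 × ℤ) := {p | 0 ≤ p.2 ∧ p.2 < f.twol p.1}

/-- `ι₀(i,j) = (i, j + (−1)^j)`, second coordinate mod `2lᵢ`. -/
def iota0 (f : Tuple) (p : ZMod 3 × ℤ) : ZMod 3 × ℤ :=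
  (p.1, (if p.2 % 2 = 0 then p.2 + 1 else p.2 - 1) % f.twol p.1)

/-- `ι₁(i,j) = (i, j − (−1)^j)`, second coordinate mod `2lᵢ`. -/
def iota1 (f : Tuple) (p : ZMod 3 × ℤ) : ZMod 3 × ℤ :=
  (p.1, (if p.2 % 2 = 0 then p.2 - 1 else p.2 + 1) % f.twol p.1)

/-- `ι₂(i,j) = (i+1, −j−1)` if `0 ≤ j ≤ hᵢ−1`, and `(i−1, 2lᵢ−j−1)` if `hᵢ ≤ j ≤ 2lᵢ−1`. -/
def iota2 (f : Tuple) (p : ZMod 3 × ℤ) : ZMod 3 × ℤ :=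
  if p.2 < f.h p.1 then (p.1 + 1, (-p.2 - 1) % f.twol (p.1 + 1))
  else (p.1 - 1, (f.twol p.1 - p.2 - 1) % f.twol (p.1 - 1))

/-- `ρ(i,j) = (i, j + qᵢ)`. -/
def rho (f : Tuple) (p : ZMod 3 × ℤ) : ZMod 3 × ℤ :=
  (p.1, (p.2 + f.q p.1) % f.twol p.1)

/-- `ρ⁻¹(i,j) = (i, j − qᵢ)`. -/
def rhoInv (f : Tuple) (p : ZMod 3 × ℤ) : ZMod 3 × ℤ :=
  (p.1, (p.2 - f.q p.1) % f.twol p.1)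

/-- `ι₃ = ρ ∘ ι₂ ∘ ρ⁻¹`. -/
def iota3 (f : Tuple) : ZMod 3 × ℤ → ZMod 3 × ℤ :=
  rho f ∘ iota2 f ∘ rhoInv f

/-- The four involutions of `Γ(f)`, indexed by the colour `c ∈ {0,1,2,3}`. -/
def iota (f : Tuple) : Fin 4 → ZMod 3 × ℤ → ZMod 3 × ℤ
  | 0 => iota0 f
  | 1 => iota1 f
  | 2 => iota2 f
  | 3 => iota3 f

/-- One step along an edge of `Γ(f)` whose colour lies in `S`, within `V(f)`. -/
def Step (f : Tuple) (S : Set (Fin 4)) (a b : ZMod 3 × ℤ) : Prop :=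
  a ∈ Vtx f ∧ b ∈ Vtx f ∧ ∃ c ∈ S, b = iota f c a

/-- The orbit relation on `V(f)` of the subgroup generated by the involutions with
colours in `S` (the `S`-residue relation). -/
def OrbRel (f : Tuple) (S : Set (Fin 4)) : ZMod 3 × ℤ → ZMod 3 × ℤ → Prop :=
  Relation.EqvGen (Step f S)

/-- The subgroup generated by the colours in `S` has exactly three orbits on `V(f)`. -/
def ThreeOrbits (f : Tuple) (S : Set (Fin 4)) : Prop :=
  ∃ a b c, a ∈ Vtx f ∧ b ∈ Vtx f ∧ c ∈ Vtx f ∧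
    ¬ OrbRel f S a b ∧ ¬ OrbRel f S a c ∧ ¬ OrbRel f S b c ∧
    ∀ v ∈ Vtx f, OrbRel f S a v ∨ OrbRel f S b v ∨ OrbRel f S c v

/-- Admissibility: conditions (I)–(IV), (V), and (VI) (three `{2,3}`-residues). -/
def Admissible (f : Tuple) : Prop :=
  CondsI_IV f ∧ CondV f ∧ ThreeOrbits f {2, 3}

/-- `ψ₁(h₀,h₁,h₂;q₀,q₁,q₂) = (h₁,h₂,h₀;q₁,q₂,q₀)`. -/
def psi1 (f : Tuple) : Tuple := ⟨f.h1, f.h2, f.h0, f.q1, f.q2, f.q0⟩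

/-- `ψ₂(h₀,h₁,h₂;q₀,q₁,q₂) = (h₂,h₁,h₀;q₀,q₂,q₁)`. -/
def psi2 (f : Tuple) : Tuple := ⟨f.h2, f.h1, f.h0, f.q0, f.q2, f.q1⟩

/-- `ψ₃(h₀,h₁,h₂;q₀,q₁,q₂) = (h₀,h₁,h₂;−q₀,−q₁,−q₂)`, the `q`-entries reduced to their
least nonnegative residues mod the respective `2lᵢ`. -/
def psi3 (f : Tuple) : Tuple :=
  ⟨f.h0, f.h1, f.h2,
    (-f.q0) % (f.h2 + f.h0), (-f.q1) % (f.h0 + f.h1), (-f.q2) % (f.h1 + f.h2)⟩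

/-- The 2-symmetric transformation `σ`, with the `q′`-entries reduced to their least
nonnegative residues mod the respective `2lᵢ′ = h′_{i−1} + h′ᵢ`. -/
def sigma (f : Tuple) : Tuple :=
  if f.q0 = 0 then f
  else if f.q0 < f.h0 ∧ f.q0 < f.h2 then
    ⟨f.h0 + f.h1 - f.q0, f.q0, f.h2 + f.h1 - f.q0,
      (f.h0 + f.h1 + f.h2 - 2 * f.q0) % ((f.h2 + f.h1 - f.q0) + (f.h0 + f.h1 - f.q0)),
      (f.q0 + f.q1 + f.h1) % ((f.h0 + f.h1 - f.q0) + f.q0),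
      (f.q0 + f.q2 + f.h1) % (f.q0 + (f.h2 + f.h1 - f.q0))⟩
  else if f.h0 < f.q0 ∧ f.h2 < f.q0 then
    ⟨f.q0 + f.h1 - f.h2, f.h0 + f.h2 - f.q0, f.q0 + f.h1 - f.h0,
      f.h1 % ((f.q0 + f.h1 - f.h0) + (f.q0 + f.h1 - f.h2)),
      (f.q0 + f.q1 - f.h2) % ((f.q0 + f.h1 - f.h2) + (f.h0 + f.h2 - f.q0)),
      (f.q0 + f.q2 - f.h0) % ((f.h0 + f.h2 - f.q0) + (f.q0 + f.h1 - f.h0))⟩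
  else if f.q0 < f.h2 then
    ⟨f.h1, f.h0, f.h1 + f.h2 - f.h0,
      (f.h1 + f.h2 - f.q0) % ((f.h1 + f.h2 - f.h0) + f.h1),
      f.q1 % (f.h1 + f.h0),
      (2 * f.q0 + f.q2 + f.h1 - f.h0) % (f.h0 + (f.h1 + f.h2 - f.h0))⟩
  else
    ⟨f.h1 + f.h0 - f.h2, f.h2, f.h1,
      (f.h1 + f.h0 - f.q0) % (f.h1 + (f.h1 + f.h0 - f.h2)),
      (2 * f.q0 + f.q1 + f.h1 - f.h2) % ((f.h1 + f.h0 - f.h2) + f.h2),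
      f.q2 % (f.h2 + f.h1)⟩

/-- The complexity `ν(f) = h₀ + h₁ + h₂`. -/
def nu (f : Tuple) : ℤ := f.h0 + f.h1 + f.h2

/-- `δ(f) = ν(σ(f)) − ν(f)`. -/
def delta (f : Tuple) : ℤ := nu (sigma f) - nu f

/-- One step of the action of a generator of `H` on admissible 6-tuples. -/
def HStep (a b : Tuple) : Prop :=
  Admissible a ∧ Admissible b ∧ (b = psi1 a ∨ b = psi2 a ∨ b = psi3 a)

/-- `H`-equivalence: the orbit relation of `H = ⟨ψ₁,ψ₂,ψ₃⟩` on `ℱ`. -/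
def HEquiv : Tuple → Tuple → Prop := Relation.EqvGen HStep

/-- One step of the action of a generator of `H′` on admissible 6-tuples. -/
def H'Step (a b : Tuple) : Prop :=
  Admissible a ∧ Admissible b ∧ (b = psi2 a ∨ b = psi3 a)

/-- `H′`-equivalence: the orbit relation of `H′ = ⟨ψ₂,ψ₃⟩` on `ℱ`. -/
def H'Equiv : Tuple → Tuple → Prop := Relation.EqvGen H'Step

/-- One step of the action of a generator of `G` on admissible 6-tuples. -/
def GStep (a b : Tuple) : Prop :=
  Admissible a ∧ Admissible b ∧ (b = psi1 a ∨ b = psi2 a ∨ b = psi3 a ∨ b = sigma a)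

/-- `G`-equivalence: the orbit relation of `G = ⟨ψ₁,ψ₂,ψ₃,σ⟩` on `ℱ`. -/
def GEquiv : Tuple → Tuple → Prop := Relation.EqvGen GStep

/-- Membership in the set `{0, r+1, r+2, …, s−1}`. -/
def inT (r s x : ℤ) : Prop := x = 0 ∨ (r < x ∧ x < s)

/-- A trap of type `(r,s)`: `H`-equivalent to an admissible `(r,r,s;q₀,0,q₂)` with
`q₀+k(q₀+q₂), q₂+k(q₀+q₂) ∈ {0,r+1,…,s−1} (mod r+s)` for all `k ≥ 0`. -/
def IsTrapOfType (r s : ℤ) (f : Tuple) : Prop :=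
  ∃ g : Tuple, Admissible g ∧ HEquiv f g ∧
    g.h0 = r ∧ g.h1 = r ∧ g.h2 = s ∧ g.q1 = 0 ∧
    ∀ k : ℕ, inT r s ((g.q0 + (k : ℤ) * (g.q0 + g.q2)) % (r + s)) ∧
             inT r s ((g.q2 + (k : ℤ) * (g.q0 + g.q2)) % (r + s))

/-- A trap: a trap of some type `(r,s)` with `0 < r ≤ s`. -/
def IsTrap (f : Tuple) : Prop := ∃ r s : ℤ, 0 < r ∧ r ≤ s ∧ IsTrapOfType r s f

/-- The canonical representative conditions (a)–(i) (together with admissibility). -/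
def Canonical (f : Tuple) : Prop :=
  Admissible f ∧
  (f.h0 ≤ f.h1 ∧ f.h1 ≤ f.h2) ∧
  (2 * f.q0 ≤ f.h2 + f.h0) ∧
  ((f.q0 = 0 ∨ 2 * f.q0 = f.h2 + f.h0) → 2 * f.q1 ≤ f.h0 + f.h1) ∧
  ((f.q0 = 0 ∨ 2 * f.q0 = f.h2 + f.h0) → (f.q1 = 0 ∨ 2 * f.q1 = f.h0 + f.h1) →
    2 * f.q2 ≤ f.h1 + f.h2) ∧
  (f.h0 = f.h1 → f.q0 ≤ f.q2 ∧ f.q2 ≤ (-f.q0) % (f.h2 + f.h0)) ∧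
  (f.h0 = f.h1 → (f.q2 = f.q0 ∨ f.q2 = (-f.q0) % (f.h2 + f.h0)) → f.q1 ≤ f.h1) ∧
  (f.h1 = f.h2 → f.q0 ≤ f.q1 ∧ f.q1 ≤ (-f.q0) % (f.h2 + f.h0)) ∧
  (f.h1 = f.h2 → (f.q1 = f.q0 ∨ f.q1 = (-f.q0) % (f.h2 + f.h0)) → f.q2 ≤ f.h2) ∧
  (f.h0 = f.h1 ∧ f.h1 = f.h2 → f.q1 ≤ f.q2)

/-- A canonical 6-tuple is minimal if its complexity is minimal in its `G`-orbit. -/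
def Minimal (f : Tuple) : Prop :=
  Canonical f ∧ ∀ g, GEquiv f g → nu f ≤ nu g

/-- A canonical 6-tuple is a root if every `G`-equivalent but not `H`-equivalent
6-tuple has strictly larger complexity. -/
def Root (f : Tuple) : Prop :=
  Canonical f ∧ ∀ g, GEquiv f g → ¬ HEquiv f g → nu f < nu g

/-- A colour-preserving isomorphism between `Γ(f)` and `Γ(f′)`. -/
def CPIso (f f' : Tuple) : Prop :=
  ∃ φ : ZMod 3 × ℤ → ZMod 3 × ℤ, Set.BijOn φ (Vtx f) (Vtx f') ∧
    ∀ c : Fin 4, ∀ v ∈ Vtx f, φ (iota f c v) = iota f' c (φ v)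

/-- The set of admissible 6-tuples, as a type. -/
abbrev AdmTuple := {f : Tuple // Admissible f}


/-!
`ψ₁` has order three, commutes with `ψ₃` and is inverted by `ψ₂`, so `H = H′⟨ψ₁⟩`. Hence the
`H`-orbit of `f′` is the union of the `H′`-orbits of `f′`, `ψ₁(f′)` and `ψ₁²(f′)`, and it suffices
that `σ` carries `H′`-orbits to `H′`-orbits. It does so because it commutes with `ψ₂` and `ψ₃`.

The substance is that `ψ₁` and `σ` preserve condition (VI), i.e. the number of `{2,3}`-residues.
These are counted by the colourings of `Γ(f)` which are constant on them. Such a colouring is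
determined by its values on the circles `1` and `2`, where circle `0` leaves its trace as a family
of chords, namely the paths through circle `0` with one edge of colour `2` and one of colour `3`.
Passing from `f` to `σ(f)`, the chords and the edges that join the circles `1` and `2` change roles,
while the remaining chords stay chords; so colourings of `Γ(σ(f))` become colourings of `Γ(f)`.
Equality of the numbers of residues follows since `σ` is an involution.
-/

theorem forall_zmod_three {P : ZMod 3 → Prop} : (∀ i, P i) ↔ P 0 ∧ P 1 ∧ P 2 := by
  refine ⟨fun h ↦ ⟨h 0, h 1, h 2⟩, fun ⟨h0, h1, h2⟩ i ↦ ?_⟩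
  fin_cases i
  exacts [h0, h1, h2]

theorem exists_periodic_extension {X : Type*} (c : ℤ) {n : ℤ} (hn : 0 < n) (F : ℤ → X) :
    ∃ a : ℤ → X, Function.Periodic a n ∧ ∀ j, c ≤ j → j < c + n → a j = F j :=
  ⟨F ∘ toIcoMod hn c, (toIcoMod_periodic hn c).comp F,
    fun _ hj hj' ↦ congrArg F ((toIcoMod_eq_self hn).2 ⟨hj, hj'⟩)⟩

theorem periodic_congr {X : Type*} {b : ℤ → X} {n : ℤ}
    (hb : Function.Periodic b n) {x y : ℤ} (k : ℤ) (h : x = y + k * n) : b x = b y :=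
  h ▸ hb.int_mul k y

theorem periodic_emod {X : Type*} {b : ℤ → X} {n : ℤ} (hb : Function.Periodic b n) (x : ℤ) :
    b (x % n) = b x :=
  periodic_congr hb (-(x / n)) (by linarith [Int.emod_add_mul_ediv x n])

/-! ### Reduction of the twists -/

/-- The tuple obtained from `f` by replacing every twist `qᵢ` by its least nonnegative residue
modulo `2lᵢ`. Working with unreduced twists makes `σ` piecewise affine. -/
def reduce (f : Tuple) : Tuple :=
  ⟨f.h0, f.h1, f.h2, f.q0 % (f.h2 + f.h0), f.q1 % (f.h0 + f.h1), f.q2 % (f.h1 + f.h2)⟩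

attribute [ext] Tuple

theorem reduce_eq_reduce {f g : Tuple} (k0 k1 k2 : ℤ) (h0 : f.h0 = g.h0) (h1 : f.h1 = g.h1)
    (h2 : f.h2 = g.h2) (q0 : f.q0 = g.q0 + k0 * (g.h2 + g.h0))
    (q1 : f.q1 = g.q1 + k1 * (g.h0 + g.h1)) (q2 : f.q2 = g.q2 + k2 * (g.h1 + g.h2)) :
    reduce f = reduce g := by
  simp only [reduce, h0, h1, h2, q0, q1, q2, Int.add_mul_emod_self_right]

theorem exists_reduce_eq {f : Tuple} (h : 0 ≤ f.q0) (h' : f.q0 < f.h2 + f.h0) :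
    ∃ k1 k2, reduce f = ⟨f.h0, f.h1, f.h2, f.q0, f.q1 + k1 * (f.h0 + f.h1),
      f.q2 + k2 * (f.h1 + f.h2)⟩ := by
  refine ⟨-(f.q1 / (f.h0 + f.h1)), -(f.q2 / (f.h1 + f.h2)), ?_⟩
  ext
  case q0 => exact Int.emod_eq_of_lt h h'
  case q1 =>
    simp only [reduce]
    linarith [Int.emod_add_mul_ediv f.q1 (f.h0 + f.h1)]
  case q2 =>
    simp only [reduce]
    linarith [Int.emod_add_mul_ediv f.q2 (f.h1 + f.h2)]
  all_goals rfl

theorem reduce_psi2 (f : Tuple) : reduce (psi2 f) = psi2 (reduce f) := by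
  simp only [reduce, psi2, add_comm]

/-- Conditions (I), (II), (IV) and (V): everything required of a tuple in `ℱ` up to condition (VI),
except that the twists need not be reduced. -/
structure WeaklyRegular (f : Tuple) : Prop where
  h0_pos : 0 < f.h0
  h1_pos : 0 < f.h1
  h2_pos : 0 < f.h2
  h1_parity : f.h1 % 2 = f.h0 % 2
  h2_parity : f.h2 % 2 = f.h0 % 2
  q0_parity : (f.h0 + f.q0) % 2 = 1
  q1_parity : (f.h0 + f.q1) % 2 = 1
  q2_parity : (f.h0 + f.q2) % 2 = 1

/-- Conditions (I)–(V). -/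
structure Regular (f : Tuple) : Prop extends WeaklyRegular f where
  q0_mem : 0 ≤ f.q0 ∧ f.q0 < f.h2 + f.h0
  q1_mem : 0 ≤ f.q1 ∧ f.q1 < f.h0 + f.h1
  q2_mem : 0 ≤ f.q2 ∧ f.q2 < f.h1 + f.h2

theorem WeaklyRegular.condI {f : Tuple} (hf : WeaklyRegular f) : CondI f :=
  forall_zmod_three.2 ⟨hf.h0_pos, hf.h1_pos, hf.h2_pos⟩

theorem regular_iff (f : Tuple) : Regular f ↔ CondsI_IV f ∧ CondV f := by
  constructor
  · rintro ⟨⟨h0, h1, h2, e1, e2, p0, p1, p2⟩, m0, m1, m2⟩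
    have h_parity : ∀ i, f.h i % 2 = f.h0 % 2 := forall_zmod_three.2 ⟨rfl, e1, e2⟩
    have q_parity : ∀ i, (f.h0 + f.q i) % 2 = 1 := forall_zmod_three.2 ⟨p0, p1, p2⟩
    refine ⟨⟨forall_zmod_three.2 ⟨h0, h1, h2⟩, fun i j ↦ (h_parity i).trans (h_parity j).symm,
      forall_zmod_three.2 ⟨m0, m1, m2⟩, fun i j ↦ ?_⟩, fun i ↦ ?_⟩
    · grind [q_parity i, q_parity j]
    · grind [h_parity i, q_parity i]
  · rintro ⟨⟨hI, hII, hIII, -⟩, hV⟩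
    have h1 : f.h1 % 2 = f.h0 % 2 := hII 1 0
    have h2 : f.h2 % 2 = f.h0 % 2 := hII 2 0
    have p1 : (f.h1 + f.q1) % 2 = 1 := hV 1
    have p2 : (f.h2 + f.q2) % 2 = 1 := hV 2
    exact ⟨⟨hI 0, hI 1, hI 2, h1, h2, hV 0, by omega, by omega⟩, hIII 0, hIII 1, hIII 2⟩

theorem WeaklyRegular.reduce {f : Tuple} (hf : WeaklyRegular f) : Regular (reduce f) := by
  obtain ⟨h0, h1, h2, e1, e2, p0, p1, p2⟩ := hf
  have emod_parity (x : ℤ) {n : ℤ} (hn : n % 2 = 0) : x % n % 2 = x % 2 :=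
    Int.emod_emod_of_dvd x (Int.dvd_of_emod_eq_zero hn)
  have emod_mem (x : ℤ) {n : ℤ} (hn : 0 < n) : 0 ≤ x % n ∧ x % n < n :=
    ⟨Int.emod_nonneg x hn.ne', Int.emod_lt_of_pos x hn⟩
  have k0 := emod_parity f.q0 (n := f.h2 + f.h0) (by omega)
  have k1 := emod_parity f.q1 (n := f.h0 + f.h1) (by omega)
  have k2 := emod_parity f.q2 (n := f.h1 + f.h2) (by omega)
  refine ⟨⟨h0, h1, h2, e1, e2, ?_, ?_, ?_⟩, emod_mem _ (add_pos h2 h0), emod_mem _ (add_pos h0 h1),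
    emod_mem _ (add_pos h1 h2)⟩ <;> simp only [GMN.reduce] <;> omega

namespace Regular

variable {f : Tuple}

theorem reduce_eq (hf : Regular f) : GMN.reduce f = f := by
  ext
  case q0 => exact Int.emod_eq_of_lt hf.q0_mem.1 hf.q0_mem.2
  case q1 => exact Int.emod_eq_of_lt hf.q1_mem.1 hf.q1_mem.2
  case q2 => exact Int.emod_eq_of_lt hf.q2_mem.1 hf.q2_mem.2
  all_goals rfl

theorem psi1 (hf : Regular f) : Regular (psi1 f) := by
  obtain ⟨⟨h0, h1, h2, e1, e2, p0, p1, p2⟩, m0, m1, m2⟩ := hf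
  refine ⟨⟨h1, h2, h0, ?_, ?_, ?_, ?_, ?_⟩, m1, m2, m0⟩ <;> simp only [GMN.psi1] <;> omega

theorem psi2 (hf : Regular f) : Regular (psi2 f) := by
  obtain ⟨⟨h0, h1, h2, e1, e2, p0, p1, p2⟩, m0, m1, m2⟩ := hf
  constructor
  · constructor <;> simp only [GMN.psi2] <;> omega
  all_goals simp only [GMN.psi2]; omega

theorem psi3 (hf : Regular f) : Regular (psi3 f) := by
  refine WeaklyRegular.reduce (f := ⟨f.h0, f.h1, f.h2, -f.q0, -f.q1, -f.q2⟩) ?_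
  obtain ⟨⟨h0, h1, h2, e1, e2, p0, p1, p2⟩, -, -, -⟩ := hf
  constructor <;> dsimp only <;> omega

end Regular

/-! ### The map `σ` -/

/-- `ψ₃` before reduction; the representative `2l₀ − q₀` of `−q₀` keeps `0 < q₀ < 2l₀`. -/
def negTwists (f : Tuple) : Tuple :=
  ⟨f.h0, f.h1, f.h2, f.h2 + f.h0 - f.q0, -f.q1, -f.q2⟩

/-- `σ` before reduction, when `0 < q₀ < h₀, h₂`. -/
def sigmaSmall (f : Tuple) : Tuple :=
  ⟨f.h0 + f.h1 - f.q0, f.q0, f.h2 + f.h1 - f.q0, f.h0 + f.h1 + f.h2 - 2 * f.q0,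
    f.q0 + f.q1 + f.h1, f.q0 + f.q2 + f.h1⟩

/-- `σ` before reduction, when `h₀, h₂ < q₀`. -/
def sigmaLarge (f : Tuple) : Tuple :=
  ⟨f.q0 + f.h1 - f.h2, f.h0 + f.h2 - f.q0, f.q0 + f.h1 - f.h0, f.h1,
    f.q0 + f.q1 - f.h2, f.q0 + f.q2 - f.h0⟩

/-- `σ` before reduction, when `h₀ < q₀ < h₂`. -/
def sigmaBetween (f : Tuple) : Tuple :=
  ⟨f.h1, f.h0, f.h1 + f.h2 - f.h0, f.h1 + f.h2 - f.q0, f.q1, 2 * f.q0 + f.q2 + f.h1 - f.h0⟩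

theorem psi3_eq_reduce_negTwists (f : Tuple) : psi3 f = reduce (negTwists f) :=
  reduce_eq_reduce (f := ⟨f.h0, f.h1, f.h2, -f.q0, -f.q1, -f.q2⟩) (-1) 0 0 rfl rfl rfl
    (by simp only [negTwists]; ring) (by simp only [negTwists]; ring)
    (by simp only [negTwists]; ring)

theorem psi3_reduce (f : Tuple) : psi3 (reduce f) = reduce (negTwists f) := by
  rw [← psi3_eq_reduce_negTwists]
  simp only [psi3, reduce, Tuple.mk.injEq, true_and]
  refine ⟨?_, ?_, ?_⟩ <;> exact Int.ModEq.neg (Int.mod_modEq _ _)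

theorem psi3_psi3 {f : Tuple} (hf : Regular f) : psi3 (psi3 f) = f := by
  rw [psi3_eq_reduce_negTwists f, psi3_reduce]
  refine (reduce_eq_reduce 0 0 0 ?_ ?_ ?_ ?_ ?_ ?_).trans hf.reduce_eq <;>
    simp only [negTwists] <;> ring

theorem psi3_psi2 (f : Tuple) : psi3 (psi2 f) = psi2 (psi3 f) := by
  simp only [psi3, psi2, add_comm]

section Branches

variable {f : Tuple}

theorem sigma_of_zero (h : f.q0 = 0) : sigma f = f := if_pos h

theorem sigma_of_small (h : 0 < f.q0) (h0 : f.q0 < f.h0) (h2 : f.q0 < f.h2) :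
    sigma f = reduce (sigmaSmall f) := by
  rw [sigma, if_neg h.ne', if_pos ⟨h0, h2⟩]
  rfl

theorem sigma_of_large (h : 0 < f.q0) (h0 : f.h0 < f.q0) (h2 : f.h2 < f.q0) :
    sigma f = reduce (sigmaLarge f) := by
  rw [sigma, if_neg h.ne', if_neg (by omega), if_pos ⟨h0, h2⟩]
  rfl

theorem sigma_of_between (h : 0 < f.q0) (h0 : f.h0 < f.q0) (h2 : f.q0 < f.h2) :
    sigma f = reduce (sigmaBetween f) := by
  rw [sigma, if_neg h.ne', if_neg (by omega), if_neg (by omega), if_pos h2]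
  rfl

theorem sigma_of_between_swap (h : 0 < f.q0) (h0 : f.q0 < f.h0) (h2 : f.h2 < f.q0) :
    sigma f = psi2 (reduce (sigmaBetween (psi2 f))) := by
  rw [sigma, if_neg h.ne', if_neg (by omega), if_neg (by omega), if_neg (by omega), ← reduce_psi2]
  rfl

theorem sigma_reduce_of_large (h : 0 < f.q0) (h0 : f.h0 < f.q0) (h2 : f.h2 < f.q0)
    (h' : f.q0 < f.h2 + f.h0) : sigma (reduce f) = reduce (sigmaLarge f) := by
  obtain ⟨k1, k2, e⟩ := exists_reduce_eq (f := f) (by omega) (by omega)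
  rw [e, sigma_of_large (by exact h) (by exact h0) (by exact h2)]
  apply reduce_eq_reduce 0 k1 k2 <;> simp only [sigmaLarge] <;> ring

theorem sigma_reduce_of_between (h : 0 < f.q0) (h0 : f.h0 < f.q0) (h2 : f.q0 < f.h2)
    (h' : f.q0 < f.h2 + f.h0) : sigma (reduce f) = reduce (sigmaBetween f) := by
  obtain ⟨k1, k2, e⟩ := exists_reduce_eq (f := f) (by omega) (by omega)
  rw [e, sigma_of_between (by exact h) (by exact h0) (by exact h2)]
  apply reduce_eq_reduce 0 k1 k2 <;> simp only [sigmaBetween] <;> ring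

end Branches

namespace Regular

variable {f : Tuple}

theorem q0_cases (hf : Regular f) : f.q0 = 0 ∨ 0 < f.q0 ∧
    (f.q0 < f.h0 ∧ f.q0 < f.h2 ∨ f.h0 < f.q0 ∧ f.h2 < f.q0 ∨
      f.h0 < f.q0 ∧ f.q0 < f.h2 ∨ f.q0 < f.h0 ∧ f.h2 < f.q0) := by
  have := hf.q0_mem
  have := hf.q0_parity
  have := hf.h2_parity
  omega

/-- Up to `ψ₂` and `ψ₃`, only the branches `q₀ = 0`, `0 < q₀ < h₀, h₂` and `h₀ < q₀ < h₂` of `σ`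
have to be considered: `ψ₃` replaces `q₀` by `h₀ + h₂ − q₀`, and `ψ₂` exchanges `h₀` and `h₂`. -/
theorem sigma_induction {P : Tuple → Prop} (zero : ∀ f, f.q0 = 0 → P f)
    (small : ∀ f, Regular f → 0 < f.q0 → f.q0 < f.h0 → f.q0 < f.h2 → P f)
    (between : ∀ f, Regular f → 0 < f.q0 → f.h0 < f.q0 → f.q0 < f.h2 → P f)
    (swap : ∀ f, Regular f → P (GMN.psi2 f) → P f) (neg : ∀ f, Regular f → P (GMN.psi3 f) → P f)
    (hf : Regular f) : P f := by
  have := hf.q0_mem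
  rcases hf.q0_cases with h | ⟨h, ⟨h0, h2⟩ | ⟨h0, h2⟩ | ⟨h0, h2⟩ | ⟨h0, h2⟩⟩
  · exact zero f h
  · exact small f hf h h0 h2
  · obtain ⟨k1, k2, e⟩ := exists_reduce_eq (f := negTwists f)
      (by simp only [negTwists]; omega) (by simp only [negTwists]; omega)
    refine neg f hf (small _ hf.psi3 ?_ ?_ ?_) <;>
      rw [psi3_eq_reduce_negTwists, e] <;> simp only [negTwists] <;> omega
  · exact between f hf h h0 h2
  · exact swap f hf (between _ hf.psi2 h h2 h0)

theorem reduce_sigmaBetween (hf : Regular f) (h0 : f.h0 < f.q0) (h2 : f.q0 < f.h2) :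
    Regular (GMN.reduce (sigmaBetween f)) := by
  obtain ⟨⟨_, _, _, _, _, _, _, _⟩, _, _, _⟩ := hf
  refine WeaklyRegular.reduce ?_
  constructor <;> simp only [sigmaBetween] <;> omega

theorem sigma (hf : Regular f) : Regular (sigma f) := by
  have hf' := hf
  obtain ⟨⟨_, _, _, _, _, _, _, _⟩, _, _, _⟩ := hf'
  rcases hf.q0_cases with h | ⟨h, ⟨h0, h2⟩ | ⟨h0, h2⟩ | ⟨h0, h2⟩ | ⟨h0, h2⟩⟩
  · rwa [sigma_of_zero h]
  · rw [sigma_of_small h h0 h2]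
    refine WeaklyRegular.reduce ?_
    constructor <;> simp only [sigmaSmall] <;> omega
  · rw [sigma_of_large h h0 h2]
    refine WeaklyRegular.reduce ?_
    constructor <;> simp only [sigmaLarge] <;> omega
  · rw [sigma_of_between h h0 h2]
    exact hf.reduce_sigmaBetween h0 h2
  · rw [sigma_of_between_swap h h0 h2]
    exact (hf.psi2.reduce_sigmaBetween h2 h0).psi2

end Regular

theorem sigma_psi2 {f : Tuple} (hf : Regular f) : sigma (psi2 f) = psi2 (sigma f) := by
  rcases hf.q0_cases with h | ⟨h, ⟨h0, h2⟩ | ⟨h0, h2⟩ | ⟨h0, h2⟩ | ⟨h0, h2⟩⟩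
  · rw [sigma_of_zero h, sigma_of_zero (f := psi2 f) h]
  · rw [sigma_of_small h h0 h2, sigma_of_small (f := psi2 f) h h2 h0, ← reduce_psi2]
    apply reduce_eq_reduce 0 0 0 <;> simp only [sigmaSmall, psi2] <;> ring
  · rw [sigma_of_large h h0 h2, sigma_of_large (f := psi2 f) h h2 h0, ← reduce_psi2]
    apply reduce_eq_reduce 0 0 0 <;> simp only [sigmaLarge, psi2] <;> ring
  · rw [sigma_of_between h h0 h2, sigma_of_between_swap (f := psi2 f) h h2 h0]
    rfl
  · rw [sigma_of_between_swap h h0 h2, sigma_of_between (f := psi2 f) h h2 h0]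
    rfl

theorem sigma_psi3 {f : Tuple} (hf : Regular f) : sigma (psi3 f) = psi3 (sigma f) := by
  refine hf.sigma_induction (P := fun f ↦ sigma (psi3 f) = psi3 (sigma f))
    (fun f h ↦ ?_) (fun f hf h h0 h2 ↦ ?_) (fun f hf h h0 h2 ↦ ?_) (fun f hf ih ↦ ?_)
    (fun f hf ih ↦ ?_)
  · rw [sigma_of_zero h, sigma_of_zero (by simp [psi3, h])]
  · have := hf.h1_pos
    rw [sigma_of_small h h0 h2, psi3_reduce, psi3_eq_reduce_negTwists, sigma_reduce_of_large]
    · apply reduce_eq_reduce 0 1 1 <;> simp only [sigmaSmall, sigmaLarge, negTwists] <;> ring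
    all_goals simp only [negTwists]; omega
  · have := hf.h0_pos
    rw [sigma_of_between h h0 h2, psi3_reduce, psi3_eq_reduce_negTwists, sigma_reduce_of_between]
    · apply reduce_eq_reduce 0 0 2 <;> simp only [sigmaBetween, negTwists] <;> ring
    all_goals simp only [negTwists]; omega
  · rw [psi3_psi2, sigma_psi2 hf.psi3, sigma_psi2 hf, psi3_psi2] at ih
    exact congrArg psi2 ih
  · rw [psi3_psi3 hf] at ih
    rw [ih, psi3_psi3 hf.psi3.sigma]

theorem sigma_sigma {f : Tuple} (hf : Regular f) : sigma (sigma f) = f := by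
  refine hf.sigma_induction (P := fun f ↦ sigma (sigma f) = f)
    (fun f h ↦ ?_) (fun f hf h h0 h2 ↦ ?_) (fun f hf h h0 h2 ↦ ?_) (fun f hf ih ↦ ?_)
    (fun f hf ih ↦ ?_)
  · rw [sigma_of_zero h, sigma_of_zero h]
  · have := hf.h1_pos
    rw [sigma_of_small h h0 h2, sigma_reduce_of_large]
    · refine (reduce_eq_reduce 0 1 1 ?_ ?_ ?_ ?_ ?_ ?_).trans hf.reduce_eq <;>
        simp only [sigmaSmall, sigmaLarge] <;> ring
    all_goals simp only [sigmaSmall]; omega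
  · have := hf.h1_pos
    rw [sigma_of_between h h0 h2, sigma_reduce_of_between]
    · refine (reduce_eq_reduce 0 0 2 ?_ ?_ ?_ ?_ ?_ ?_).trans hf.reduce_eq <;>
        simp only [sigmaBetween] <;> ring
    all_goals simp only [sigmaBetween]; omega
  · rw [sigma_psi2 hf, sigma_psi2 hf.sigma] at ih
    exact congrArg psi2 ih
  · rw [sigma_psi3 hf, sigma_psi3 hf.sigma] at ih
    rw [← psi3_psi3 hf.sigma.sigma, ih, psi3_psi3 hf]

/-! ### Colourings constant on the `{2,3}`-residues -/

/-- A colouring of the vertices of `Γ(f)`, extended periodically from each circle to `ℤ`, which is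
constant on the edges of colour `2`. -/
structure IsTwoColoring {X : Type} (f : Tuple) (b : ZMod 3 → ℤ → X) : Prop where
  periodic : ∀ i, Function.Periodic (b i) (f.twol i)
  edge : ∀ i j, 0 ≤ j → j < f.h i → b i j = b (i + 1) (-j - 1)

/-- A colouring of the vertices of `Γ(f)`, extended periodically from each circle to `ℤ`, which is
constant on the `{2,3}`-residues. Since `ι₃` is conjugate to `ι₂` by `ρ`, the condition at the edges
of colour `3` is that for colour `2` after a shift by the twists, which may be unreduced. -/
structure IsColoring {X : Type} (f : Tuple) (b : ZMod 3 → ℤ → X) : Prop where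
  two : IsTwoColoring f b
  three : IsTwoColoring f fun i j ↦ b i (j + f.q i)

/-- The set of colours used by a colouring. -/
def palette {X : Type} (b : ZMod 3 → ℤ → X) : Set X := ⋃ i, Set.range (b i)

theorem mem_palette {X : Type} {b : ZMod 3 → ℤ → X} {x : X} : x ∈ palette b ↔ ∃ i j, b i j = x := by
  simp only [palette, Set.mem_iUnion, Set.mem_range]

section Colorings

variable {X : Type} {f : Tuple} {b : ZMod 3 → ℤ → X}

theorem IsTwoColoring.of_reduce (hb : IsTwoColoring (reduce f) b) : IsTwoColoring f b :=
  ⟨hb.periodic, hb.edge⟩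

theorem q_reduce (f : Tuple) (i : ZMod 3) : (reduce f).q i = f.q i % f.twol i := by
  revert i
  exact forall_zmod_three.2 ⟨rfl, rfl, rfl⟩

theorem IsColoring.of_reduce (hb : IsColoring (reduce f) b) : IsColoring f b where
  two := hb.two.of_reduce
  three := by
    convert hb.three.of_reduce using 3 with i j
    refine periodic_congr (hb.two.periodic i) (f.q i / f.twol i) ?_
    rw [q_reduce]
    change _ = _ + f.q i / f.twol i * f.twol i
    linarith [Int.emod_add_mul_ediv (f.q i) (f.twol i)]

namespace IsTwoColoring

theorem eq_of_eq_add (hb : IsTwoColoring f b) (i : ZMod 3) (x k m : ℤ) {u v : ℤ}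
    (hx : 0 ≤ x ∧ x < f.h i) (hu : u = x + k * f.twol i)
    (hv : v = -x - 1 + m * f.twol (i + 1)) : b i u = b (i + 1) v := by
  rw [periodic_congr (hb.periodic i) k hu, periodic_congr (hb.periodic (i + 1)) m hv,
    hb.edge i x hx.1 hx.2]

theorem map_iota2 (hb : IsTwoColoring f b) {p : ZMod 3 × ℤ} (hp : p ∈ Vtx f) :
    b (iota2 f p).1 (iota2 f p).2 = b p.1 p.2 := by
  obtain ⟨h0, h1⟩ := hp
  unfold iota2
  split_ifs with h
  · exact (periodic_emod (hb.periodic _) _).trans (hb.edge _ _ h0 h).symm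
  · have twol_eq : f.twol p.1 = f.h (p.1 - 1) + f.h p.1 := rfl
    have edge := hb.eq_of_eq_add (p.1 - 1) (f.twol p.1 - p.2 - 1) 0 1 (u := f.twol p.1 - p.2 - 1)
      (v := p.2) (by omega) (by ring) (by rw [sub_add_cancel]; ring)
    rw [sub_add_cancel] at edge
    exact (periodic_emod (hb.periodic _) _).trans edge

end IsTwoColoring

end Colorings

section ExplicitEdges

/-! The edges of `Γ(f)` with the entries of `f` as literals, so that linear arithmetic applies. -/

variable {X : Type} {b : ZMod 3 → ℤ → X} {h0 h1 h2 q0 q1 q2 : ℤ}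

namespace IsColoring

theorem two₀ (hb : IsColoring ⟨h0, h1, h2, q0, q1, q2⟩ b) (x k m : ℤ) {u v : ℤ}
    (hx : 0 ≤ x ∧ x < h0) (hu : u = x + k * (h2 + h0)) (hv : v = -x - 1 + m * (h0 + h1)) :
    b 0 u = b 1 v :=
  hb.two.eq_of_eq_add 0 x k m hx hu hv

theorem two₁ (hb : IsColoring ⟨h0, h1, h2, q0, q1, q2⟩ b) (x k m : ℤ) {u v : ℤ}
    (hx : 0 ≤ x ∧ x < h1) (hu : u = x + k * (h0 + h1)) (hv : v = -x - 1 + m * (h1 + h2)) :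
    b 1 u = b 2 v :=
  hb.two.eq_of_eq_add 1 x k m hx hu hv

theorem two₂ (hb : IsColoring ⟨h0, h1, h2, q0, q1, q2⟩ b) (x k m : ℤ) {u v : ℤ}
    (hx : 0 ≤ x ∧ x < h2) (hu : u = x + k * (h1 + h2)) (hv : v = -x - 1 + m * (h2 + h0)) :
    b 2 u = b 0 v :=
  hb.two.eq_of_eq_add 2 x k m hx hu hv

theorem three_eq_of_eq_add {f : Tuple} (hb : IsColoring f b) (i : ZMod 3) (x k m : ℤ) {u v : ℤ}
    (hx : 0 ≤ x ∧ x < f.h i) (hu : u = x + f.q i + k * f.twol i)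
    (hv : v = -x - 1 + f.q (i + 1) + m * f.twol (i + 1)) : b i u = b (i + 1) v := by
  have edge := hb.three.eq_of_eq_add i x k m (u := u - f.q i) (v := v - f.q (i + 1)) hx
    (by rw [hu]; ring) (by rw [hv]; ring)
  simpa only [sub_add_cancel] using edge

theorem three₀ (hb : IsColoring ⟨h0, h1, h2, q0, q1, q2⟩ b) (x k m : ℤ) {u v : ℤ}
    (hx : 0 ≤ x ∧ x < h0) (hu : u = x + q0 + k * (h2 + h0))
    (hv : v = -x - 1 + q1 + m * (h0 + h1)) : b 0 u = b 1 v :=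
  hb.three_eq_of_eq_add 0 x k m hx hu hv

theorem three₁ (hb : IsColoring ⟨h0, h1, h2, q0, q1, q2⟩ b) (x k m : ℤ) {u v : ℤ}
    (hx : 0 ≤ x ∧ x < h1) (hu : u = x + q1 + k * (h0 + h1))
    (hv : v = -x - 1 + q2 + m * (h1 + h2)) : b 1 u = b 2 v :=
  hb.three_eq_of_eq_add 1 x k m hx hu hv

theorem three₂ (hb : IsColoring ⟨h0, h1, h2, q0, q1, q2⟩ b) (x k m : ℤ) {u v : ℤ}
    (hx : 0 ≤ x ∧ x < h2) (hu : u = x + q2 + k * (h1 + h2))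
    (hv : v = -x - 1 + q0 + m * (h2 + h0)) : b 2 u = b 0 v :=
  hb.three_eq_of_eq_add 2 x k m hx hu hv

theorem periodic₁ (hb : IsColoring ⟨h0, h1, h2, q0, q1, q2⟩ b) :
    Function.Periodic (b 1) (h0 + h1) :=
  hb.two.periodic 1

theorem periodic₂ (hb : IsColoring ⟨h0, h1, h2, q0, q1, q2⟩ b) :
    Function.Periodic (b 2) (h1 + h2) :=
  hb.two.periodic 2

end IsColoring

end ExplicitEdges

/-! ### Counting `{2,3}`-residues by colourings -/

/-- The set of `{2,3}`-residues of `Γ(f)`. -/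
def residues (f : Tuple) : Set (Quot (Step f {2, 3})) := Quot.mk _ '' Vtx f

theorem mk_eq_mk_iff_orbRel {f : Tuple} {u v : ZMod 3 × ℤ} :
    Quot.mk (Step f {2, 3}) u = Quot.mk (Step f {2, 3}) v ↔ OrbRel f {2, 3} u v :=
  ⟨Quot.eqvGen_exact, Quot.eqvGen_sound⟩

theorem threeOrbits_iff (f : Tuple) : ThreeOrbits f {2, 3} ↔ (residues f).encard = 3 := by
  rw [Set.encard_eq_three]
  constructor
  · rintro ⟨a, b, c, ha, hb, hc, hab, hac, hbc, h⟩
    simp only [← mk_eq_mk_iff_orbRel] at hab hac hbc h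
    refine ⟨_, _, _, hab, hac, hbc, Set.Subset.antisymm ?_ ?_⟩
    · rintro _ ⟨v, hv, rfl⟩
      exact (h v hv).imp Eq.symm (Or.imp Eq.symm Eq.symm)
    · rintro _ (rfl | rfl | rfl)
      exacts [⟨a, ha, rfl⟩, ⟨b, hb, rfl⟩, ⟨c, hc, rfl⟩]
  · rintro ⟨x, y, z, hxy, hxz, hyz, h⟩
    obtain ⟨a, ha, rfl⟩ : x ∈ residues f := h ▸ .inl rfl
    obtain ⟨b, hb, rfl⟩ : y ∈ residues f := h ▸ .inr (.inl rfl)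
    obtain ⟨c, hc, rfl⟩ : z ∈ residues f := h ▸ .inr (.inr rfl)
    simp only [ThreeOrbits, ← mk_eq_mk_iff_orbRel]
    refine ⟨a, b, c, ha, hb, hc, hxy, hxz, hyz, fun v hv ↦ ?_⟩
    have hv' : Quot.mk _ v ∈ residues f := ⟨v, hv, rfl⟩
    rw [h] at hv'
    exact hv'.imp Eq.symm (Or.imp Eq.symm Eq.symm)

section CondI

variable {X : Type} {f g : Tuple}

theorem twol_pos (hf : CondI f) (i : ZMod 3) : 0 < f.twol i := add_pos (hf _) (hf _)

theorem emod_mem_vtx (hf : CondI f) (i : ZMod 3) (j : ℤ) : (i, j % f.twol i) ∈ Vtx f :=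
  ⟨Int.emod_nonneg _ (twol_pos hf i).ne', Int.emod_lt_of_pos _ (twol_pos hf i)⟩

namespace IsColoring

variable {a : ZMod 3 → ℤ → X}

theorem eq_of_step (hf : CondI f) (ha : IsColoring f a) {u v : ZMod 3 × ℤ}
    (h : Step f {2, 3} u v) : a u.1 u.2 = a v.1 v.2 := by
  obtain ⟨hu, -, c, rfl | rfl, rfl⟩ := h
  · exact (ha.two.map_iota2 hu).symm
  · have rhoInv_mem : rhoInv f u ∈ Vtx f := emod_mem_vtx hf _ _
    calc a u.1 u.2 = a u.1 (u.2 - f.q u.1 + f.q u.1) := by rw [sub_add_cancel]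
      _ = a u.1 ((rhoInv f u).2 + f.q u.1) := (periodic_emod (ha.three.periodic u.1) _).symm
      _ = a (iota2 f (rhoInv f u)).1 ((iota2 f (rhoInv f u)).2 + f.q _) :=
        (ha.three.map_iota2 rhoInv_mem).symm
      _ = a (iota f 3 u).1 (iota f 3 u).2 := (periodic_emod (ha.two.periodic _) _).symm

theorem encard_palette_le (hf : CondI f) (ha : IsColoring f a) :
    (palette a).encard ≤ (residues f).encard := by
  let color : Quot (Step f {2, 3}) → X := Quot.lift (fun u ↦ a u.1 u.2) fun _ _ ↦ ha.eq_of_step hf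
  have palette_subset : palette a ⊆ color '' residues f := by
    intro x hx
    obtain ⟨i, j, rfl⟩ := mem_palette.1 hx
    exact ⟨_, ⟨_, emod_mem_vtx hf i j, rfl⟩, periodic_emod (ha.two.periodic i) j⟩
  exact (Set.encard_le_encard palette_subset).trans (Set.encard_image_le _ _)

end IsColoring

/-- The universal colouring: each vertex is coloured by its `{2,3}`-residue. -/
def residueColoring (f : Tuple) (i : ZMod 3) (j : ℤ) : Quot (Step f {2, 3}) :=
  Quot.mk _ (i, j % f.twol i)

theorem residues_subset_palette (f : Tuple) : residues f ⊆ palette (residueColoring f) := by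
  rintro _ ⟨u, hu, rfl⟩
  exact mem_palette.2 ⟨u.1, u.2, congrArg (fun j ↦ Quot.mk _ (u.1, j))
    (Int.emod_eq_of_lt hu.1 hu.2)⟩

theorem residueColoring_periodic (f : Tuple) (i : ZMod 3) :
    Function.Periodic (residueColoring f i) (f.twol i) := fun j ↦ by
  simp only [residueColoring, Int.add_emod_right]

theorem isColoring_residueColoring (hf : CondI f) : IsColoring f (residueColoring f) := by
  have emod_eq {i j} (hj : 0 ≤ j) (hj' : j < f.h i) : j % f.twol i = j :=
    Int.emod_eq_of_lt hj (hj'.trans (lt_add_of_pos_left _ (hf _)))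
  have iota2_eq {i j} (hj' : j < f.h i) :
      iota2 f (i, j) = (i + 1, (-j - 1) % f.twol (i + 1)) := if_pos hj'
  refine ⟨⟨residueColoring_periodic f, fun i j hj hj' ↦ ?_⟩,
    ⟨fun i j ↦ ?_, fun i j hj hj' ↦ ?_⟩⟩
  · refine Quot.sound ⟨emod_mem_vtx hf _ _, emod_mem_vtx hf _ _, 2, .inl rfl, ?_⟩
    rw [emod_eq hj hj']
    exact (iota2_eq hj').symm
  · simp only [residueColoring]
    rw [add_right_comm, Int.add_emod_right]
  · refine Quot.sound ⟨emod_mem_vtx hf _ _, emod_mem_vtx hf _ _, 3, .inr rfl, ?_⟩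
    have rhoInv_eq : rhoInv f (i, (j + f.q i) % f.twol i) = (i, j) := by
      simp only [rhoInv, Int.emod_sub_emod, add_sub_cancel_right, emod_eq hj hj']
    change _ = rho f (iota2 f (rhoInv f _))
    rw [rhoInv_eq, iota2_eq hj']
    simp only [rho, Int.emod_add_emod]

/-- Every colouring of `g` gives rise to one of `f` that uses at least the same colours. As `Γ(f)`
carries a universal colouring by residues, this bounds the number of residues of `g`. -/
def Dominates (f g : Tuple) : Prop :=
  ∀ (X : Type) (b : ZMod 3 → ℤ → X), IsColoring g b → ∃ a, IsColoring f a ∧ palette b ⊆ palette a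

theorem Dominates.trans {k : Tuple} (h : Dominates f g) (h' : Dominates g k) : Dominates f k := by
  intro X c hc
  obtain ⟨b, hb, hcb⟩ := h' X c hc
  obtain ⟨a, ha, hba⟩ := h X b hb
  exact ⟨a, ha, hcb.trans hba⟩

theorem Dominates.encard_residues_le (hf : CondI f) (hg : CondI g) (h : Dominates f g) :
    (residues g).encard ≤ (residues f).encard := by
  obtain ⟨a, ha, hsub⟩ := h _ _ (isColoring_residueColoring hg)
  exact (Set.encard_le_encard ((residues_subset_palette g).trans hsub)).trans
    (ha.encard_palette_le hf)

theorem Admissible.regular (hf : Admissible f) : Regular f :=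
  (regular_iff f).2 ⟨hf.1, hf.2.1⟩

theorem Admissible.of_dominates (hf : Admissible f) (hg : Regular g) (h : Dominates f g)
    (h' : Dominates g f) : Admissible g := by
  have hf' := hf.regular.condI
  obtain ⟨hI_IV, hV⟩ := (regular_iff g).1 hg
  refine ⟨hI_IV, hV, (threeOrbits_iff g).2 ?_⟩
  rw [← (threeOrbits_iff f).1 hf.2.2]
  exact (h.encard_residues_le hf' hg.condI).antisymm (h'.encard_residues_le hg.condI hf')

end CondI

/-! ### Colourings and the symmetries `ψ₁`, `ψ₂`, `ψ₃` -/

section Symmetries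

variable {X : Type} {f : Tuple} {b : ZMod 3 → ℤ → X}

theorem IsTwoColoring.rotate (hb : IsTwoColoring (psi1 f) b) :
    IsTwoColoring f fun i ↦ b (i - 1) where
  periodic := forall_zmod_three.2 ⟨hb.periodic 2, hb.periodic 0, hb.periodic 1⟩
  edge := forall_zmod_three.2 ⟨hb.edge 2, hb.edge 0, hb.edge 1⟩

theorem dominates_psi1 (f : Tuple) : Dominates f (psi1 f) := by
  intro X b hb
  refine ⟨fun i ↦ b (i - 1), ⟨hb.two.rotate, ?_⟩, Set.iUnion_subset fun i ↦ ?_⟩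
  · have q_psi1 : ∀ i, (psi1 f).q (i - 1) = f.q i := forall_zmod_three.2 ⟨rfl, rfl, rfl⟩
    simpa only [q_psi1] using hb.three.rotate
  · rintro _ ⟨j, rfl⟩
    exact mem_palette.2 ⟨i + 1, j, by rw [add_sub_cancel_right]⟩

theorem IsTwoColoring.reflect (hb : IsTwoColoring (psi2 f) b) :
    IsTwoColoring f fun i j ↦ b (-i) (-j - 1) where
  periodic i j := by
    have twol_psi2 : ∀ i, (psi2 f).twol (-i) = f.twol i :=
      forall_zmod_three.2 ⟨add_comm _ _, add_comm _ _, add_comm _ _⟩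
    exact periodic_congr (hb.periodic (-i)) (-1) (by rw [twol_psi2]; ring)
  edge i j hj hj' := by
    have h_psi2 : ∀ i, (psi2 f).h (-i - 1) = f.h i := forall_zmod_three.2 ⟨rfl, rfl, rfl⟩
    have edge := hb.edge (-i - 1) j hj (by rwa [h_psi2])
    rw [sub_add_cancel] at edge
    rw [edge.symm, neg_add']
    congr 1
    ring

theorem dominates_psi2 (f : Tuple) : Dominates f (psi2 f) := by
  intro X b hb
  have q_psi2 : ∀ i, (psi2 f).q (-i) = f.q i := forall_zmod_three.2 ⟨rfl, rfl, rfl⟩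
  refine ⟨fun i j ↦ b (-i) (-j - 1 + f.q i), ⟨?_, ?_⟩, Set.iUnion_subset fun i ↦ ?_⟩
  · simpa only [q_psi2] using hb.three.reflect
  · convert hb.two.reflect using 4 with i j
    ring
  · rintro _ ⟨j, rfl⟩
    refine mem_palette.2 ⟨-i, -j - 1 + f.q (-i), ?_⟩
    rw [neg_neg]
    congr 1
    ring

theorem dominates_psi3 (f : Tuple) : Dominates f (psi3 f) := by
  intro X b hb
  have hb' : IsColoring ⟨f.h0, f.h1, f.h2, -f.q0, -f.q1, -f.q2⟩ b := IsColoring.of_reduce hb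
  have q_neg : ∀ i, Tuple.q ⟨f.h0, f.h1, f.h2, -f.q0, -f.q1, -f.q2⟩ i = -f.q i :=
    forall_zmod_three.2 ⟨rfl, rfl, rfl⟩
  refine ⟨fun i j ↦ b i (j - f.q i), ⟨?_, ?_⟩, Set.iUnion_subset fun i ↦ ?_⟩
  · have three := hb'.three
    simp only [q_neg, ← sub_eq_add_neg] at three
    exact ⟨three.periodic, three.edge⟩
  · simp only [add_sub_cancel_right]
    exact ⟨hb'.two.periodic, hb'.two.edge⟩
  · rintro _ ⟨j, rfl⟩
    exact mem_palette.2 ⟨i, j + f.q i, by rw [add_sub_cancel_right]⟩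

end Symmetries

theorem Admissible.psi1 {f : Tuple} (hf : Admissible f) : Admissible (psi1 f) :=
  hf.of_dominates hf.regular.psi1 (dominates_psi1 f)
    ((dominates_psi1 (GMN.psi1 f)).trans (dominates_psi1 (GMN.psi1 (GMN.psi1 f))))

/-! ### Colourings and `σ` -/

section Sigma

variable {X : Type} {f g : Tuple} {a₁ a₂ : ℤ → X}

/-- The colour at position `r ∈ [-h₂, h₀)` of circle `0` which is forced by the colours `a₁`, `a₂`
on circles `1` and `2` along the edges of colour `2`. -/
def circleZeroColor (a₁ a₂ : ℤ → X) (r : ℤ) : X := if 0 ≤ r then a₁ (-r - 1) else a₂ (-r - 1)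

theorem IsTwoColoring.of_circleZeroColor {a : ZMod 3 → ℤ → X} (hf : CondI f)
    (periodic : ∀ i, Function.Periodic (a i) (f.twol i))
    (zero : ∀ j, -f.h2 ≤ j → j < f.h0 → a 0 j = circleZeroColor (a 1) (a 2) j)
    (one : ∀ j, 0 ≤ j → j < f.h1 → a 1 j = a 2 (-j - 1)) : IsTwoColoring f a := by
  have hh0 : 0 < f.h0 := hf 0
  have hh2 : 0 < f.h2 := hf 2
  refine ⟨periodic, forall_zmod_three.2 ⟨fun j hj (hj' : j < f.h0) ↦ ?_, one,
    fun j hj (hj' : j < f.h2) ↦ ?_⟩⟩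
  · exact (zero j (by omega) hj').trans (if_pos hj)
  · refine .trans ?_ (zero (-j - 1) (by omega) (by omega)).symm
    rw [circleZeroColor, if_neg (by omega)]
    congr 1
    ring

/-- A colouring `a₁`, `a₂` of the circles `1` and `2` of `Γ(f)` that is constant on the traces of
the `{2,3}`-residues: besides the edges between the two circles, it has to respect the chords formed
by an edge of colour `2` and an edge of colour `3` that meet on circle `0`. -/
structure IsContractedColoring (f : Tuple) (a₁ a₂ : ℤ → X) : Prop where
  periodic₁ : Function.Periodic a₁ (f.h0 + f.h1)
  periodic₂ : Function.Periodic a₂ (f.h1 + f.h2)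
  two : ∀ j, 0 ≤ j → j < f.h1 → a₁ j = a₂ (-j - 1)
  three : ∀ j, 0 ≤ j → j < f.h1 → a₁ (j + f.q1) = a₂ (-j - 1 + f.q2)
  chord : ∀ j k, -f.h2 ≤ j → j < f.h0 → -f.h2 ≤ k → k < f.h0 →
    (k = j + f.q0 ∨ k = j + f.q0 - (f.h0 + f.h2)) →
      circleZeroColor a₁ a₂ k =
        circleZeroColor (fun i ↦ a₁ (i + f.q1)) (fun i ↦ a₂ (i + f.q2)) j

theorem IsContractedColoring.exists_isColoring (ha : IsContractedColoring f a₁ a₂) (hf : CondI f)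
    (hq : 0 ≤ f.q0) (hq' : f.q0 < f.h2 + f.h0) : ∃ a, IsColoring f a ∧ a 1 = a₁ ∧ a 2 = a₂ := by
  obtain ⟨a₀, periodic₀, ha₀⟩ :=
    exists_periodic_extension (-f.h2) (twol_pos hf 0) (circleZeroColor a₁ a₂)
  change Function.Periodic a₀ (f.h2 + f.h0) at periodic₀
  have color_eq : ∀ j, -f.h2 ≤ j → j < f.h0 → a₀ j = circleZeroColor a₁ a₂ j := fun j hj hj' ↦
    ha₀ j hj (by change j < -f.h2 + (f.h2 + f.h0); omega)
  have color_add_twist_eq : ∀ j, -f.h2 ≤ j → j < f.h0 →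
      a₀ (j + f.q0) = circleZeroColor (fun i ↦ a₁ (i + f.q1)) (fun i ↦ a₂ (i + f.q2)) j := by
    intro j hj hj'
    by_cases hk : j + f.q0 < f.h0
    · rw [color_eq _ (by omega) hk]
      exact ha.chord j _ hj hj' (by omega) hk (.inl rfl)
    · rw [periodic_congr periodic₀ (y := j + f.q0 - (f.h0 + f.h2)) 1 (by ring),
        color_eq _ (by omega) (by omega)]
      exact ha.chord j _ hj hj' (by omega) (by omega) (.inr rfl)
  let a : ZMod 3 → ℤ → X := (![a₀, a₁, a₂] : Fin 3 → ℤ → X)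
  have periodic : ∀ i, Function.Periodic (a i) (f.twol i) :=
    forall_zmod_three.2 ⟨periodic₀, ha.periodic₁, ha.periodic₂⟩
  exact ⟨a, ⟨.of_circleZeroColor hf periodic color_eq ha.two, .of_circleZeroColor hf
    (fun i j ↦ periodic_congr (periodic i) 1 (by ring)) color_add_twist_eq ha.three⟩, rfl, rfl⟩

theorem IsColoring.palette_subset {b : ZMod 3 → ℤ → X} (hb : IsColoring g b)
    (hg : 0 < g.h2 + g.h0) : palette b ⊆ Set.range (b 1) ∪ Set.range (b 2) := by
  refine Set.iUnion_subset (forall_zmod_three.2 ⟨?_, Set.subset_union_left,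
    Set.subset_union_right⟩)
  rintro _ ⟨j, rfl⟩
  have mod_lt := Int.emod_lt_of_pos j hg
  have mod_nonneg := Int.emod_nonneg j hg.ne'
  have div_add_mod := Int.emod_add_mul_ediv j (g.h2 + g.h0)
  by_cases hj : j % (g.h2 + g.h0) < g.h0
  · exact .inl ⟨_, (hb.two₀ (j % (g.h2 + g.h0)) (j / (g.h2 + g.h0)) 0 ⟨mod_nonneg, hj⟩
      (by linarith) rfl).symm⟩
  · exact .inr ⟨_, hb.two₂ (g.h2 + g.h0 - 1 - j % (g.h2 + g.h0)) 0 (1 + j / (g.h2 + g.h0))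
      (by omega) rfl (by linarith)⟩

theorem IsColoring.exists_of_isContractedColoring {b : ZMod 3 → ℤ → X} {c d : ℤ}
    (hb : IsColoring g b) (hg : 0 < g.h2 + g.h0) (hf : Regular f)
    (ha : IsContractedColoring f (fun j ↦ b 1 (j + c)) (fun j ↦ b 2 (d - j))) :
    ∃ a, IsColoring f a ∧ palette b ⊆ palette a := by
  obtain ⟨a, hfa, ha₁, ha₂⟩ := ha.exists_isColoring hf.condI hf.q0_mem.1 hf.q0_mem.2
  refine ⟨a, hfa, (hb.palette_subset hg).trans (Set.union_subset ?_ ?_)⟩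
  · rintro _ ⟨j, rfl⟩
    exact mem_palette.2 ⟨1, j - c, by simp only [ha₁, sub_add_cancel]⟩
  · rintro _ ⟨j, rfl⟩
    exact mem_palette.2 ⟨2, d - j, by simp only [ha₂, sub_sub_cancel]⟩

theorem IsColoring.contract_of_small {b : ZMod 3 → ℤ → X} (hb : IsColoring (sigmaSmall f) b)
    (hh1 : 0 < f.h1) (hq : 0 < f.q0) (hq0 : f.q0 < f.h0) (hq2 : f.q0 < f.h2) :
    IsContractedColoring f (fun j ↦ b 1 (j + f.q0)) (fun j ↦ b 2 (f.q2 - 1 - j)) where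
  periodic₁ j := periodic_congr hb.periodic₁ 1 (by ring)
  periodic₂ j := periodic_congr hb.periodic₂ (-1) (by ring)
  two j hj hj' :=
    (hb.two₀ (f.h0 + f.h1 - 1 - f.q0 - j) 0 1 (by omega) rfl (by ring)).symm.trans
      (hb.three₂ (j + f.h2 - f.q0) (-1) 0 (by omega) (by ring) (by ring)).symm
  three j hj hj' :=
    (hb.three₀ (f.h1 - 1 - j) 0 0 (by omega) rfl (by ring)).symm.trans
      (hb.two₂ j 0 1 (by omega) (by ring) (by ring)).symm
  chord j k hj hj' hk hk' hjk := by
    unfold circleZeroColor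
    split_ifs with h h'
    · obtain rfl : k = j + f.q0 := by omega
      exact (hb.two₀ j 0 0 (by omega) rfl (by ring)).symm.trans
        (hb.three₀ (j + f.h1) (-1) 0 (by omega) (by ring) (by ring))
    · obtain rfl : k = j + f.q0 := by omega
      exact hb.two₁ (-j - 1) 0 0 (by omega) (by ring) (by ring)
    · obtain rfl : k = j + f.q0 - (f.h0 + f.h2) := by omega
      exact (hb.three₁ (-j - 1 + f.h0) (-1) (-1) (by omega) (by ring) (by ring)).symm
    · obtain rfl : k = j + f.q0 := by omega
      exact (hb.three₂ (j + f.h2) (-1) 0 (by omega) (by ring) rfl).trans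
        (hb.two₂ (j + f.h1 + f.h2) (-1) 1 (by omega) (by ring) (by ring)).symm

theorem IsColoring.contract_of_between {b : ZMod 3 → ℤ → X} (hb : IsColoring (sigmaBetween f) b)
    (hh1 : 0 < f.h1) (hq0 : f.h0 < f.q0) (hq2 : f.q0 < f.h2) :
    IsContractedColoring f (fun j ↦ b 1 (j + f.h0))
      (fun j ↦ b 2 (f.q0 + f.q2 - f.h0 - 1 - j)) where
  periodic₁ j := periodic_congr hb.periodic₁ 1 (by ring)
  periodic₂ j := periodic_congr hb.periodic₂ (-1) (by ring)
  two j hj hj' :=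
    (hb.two₀ (f.h1 - 1 - j) 0 1 (by omega) rfl (by ring)).symm.trans
      (hb.three₂ (j - f.q0 + f.h2) (-1) 0 (by omega) (by ring) (by ring)).symm
  three j hj hj' :=
    (hb.three₀ (f.h1 - 1 - j) 0 1 (by omega) rfl (by ring)).symm.trans
      (hb.two₂ (f.q0 - f.h0 + j) 0 1 (by omega) (by ring) (by ring)).symm
  chord j k hj hj' hk hk' hjk := by
    unfold circleZeroColor
    split_ifs with h h'
    · omega
    · obtain rfl : k = j + f.q0 := by omega
      exact hb.two₁ (f.h0 - 1 - (j + f.q0)) 0 0 (by omega) (by ring) (by ring)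
    · obtain rfl : k = j + f.q0 - (f.h0 + f.h2) := by omega
      exact (hb.three₁ (f.h0 - 1 - j) 0 (-1) (by omega) (by ring) (by ring)).symm
    · rcases hjk with rfl | rfl
      · exact (hb.three₂ (j + f.h2) (-1) 0 (by omega) (by ring) rfl).trans
          (hb.two₂ (j + f.q0 - f.h0 + f.h1 + f.h2) (-1) 1 (by omega) (by ring) (by ring)).symm
      · exact (hb.three₂ (j - f.h0 + f.h1 + f.h2) (-2) 0 (by omega) (by ring) rfl).trans
          (hb.two₂ (j + f.q0 - f.h0) 0 0 (by omega) (by ring) (by ring)).symm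

theorem dominates_sigma (hf : Regular f) : Dominates f (sigma f) := by
  refine hf.sigma_induction (P := fun f ↦ Dominates f (sigma f)) (fun f h ↦ ?_)
    (fun f hf h h0 h2 X b hb ↦ ?_) (fun f hf h h0 h2 X b hb ↦ ?_) (fun f hf ih ↦ ?_)
    (fun f hf ih ↦ ?_)
  · rw [sigma_of_zero h]
    exact fun X b hb ↦ ⟨b, hb, subset_rfl⟩
  · rw [sigma_of_small h h0 h2] at hb
    have := hf.h1_pos
    exact hb.of_reduce.exists_of_isContractedColoring (by simp only [sigmaSmall]; omega) hf
      (hb.of_reduce.contract_of_small hf.h1_pos h h0 h2)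
  · rw [sigma_of_between h h0 h2] at hb
    have := hf.h1_pos
    exact hb.of_reduce.exists_of_isContractedColoring (by simp only [sigmaBetween]; omega) hf
      (hb.of_reduce.contract_of_between hf.h1_pos h0 h2)
  · rw [sigma_psi2 hf] at ih
    exact ((dominates_psi2 f).trans ih).trans (dominates_psi2 (psi2 (sigma f)))
  · rw [sigma_psi3 hf] at ih
    have back := dominates_psi3 (psi3 (sigma f))
    rw [psi3_psi3 hf.sigma] at back
    exact ((dominates_psi3 f).trans ih).trans back

end Sigma

theorem Admissible.sigma {f : Tuple} (hf : Admissible f) : Admissible (sigma f) := by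
  have back := dominates_sigma hf.regular.sigma
  rw [sigma_sigma hf.regular] at back
  exact hf.of_dominates hf.regular.sigma (dominates_sigma hf.regular) back

/-! ### Orbits of `H` and `H′` -/

theorem H'Equiv.sigma {f g : Tuple} (h : H'Equiv f g) : H'Equiv (sigma f) (sigma g) := by
  induction h with
  | rel f g h =>
    obtain ⟨hf, hg, rfl | rfl⟩ := h
    · exact .rel _ _ ⟨hf.sigma, hg.sigma, .inl (sigma_psi2 hf.regular)⟩
    · exact .rel _ _ ⟨hf.sigma, hg.sigma, .inr (sigma_psi3 hf.regular)⟩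
  | refl f => exact .refl _
  | symm _ _ _ ih => exact .symm _ _ ih
  | trans _ _ _ _ _ ih ih' => exact .trans _ _ _ ih ih'

/-- The `H′`-classes of `f`, `ψ₁(f)` and `ψ₁²(f)`. -/
def rotationClasses (f : Tuple) : Set (Quot H'Step) :=
  {Quot.mk _ f, Quot.mk _ (psi1 f), Quot.mk _ (psi1 (psi1 f))}

theorem rotationClasses_psi1 (f : Tuple) : rotationClasses (psi1 f) = rotationClasses f :=
  (congrArg (insert _) (Set.pair_comm _ _)).trans (Set.insert_comm _ _ _)

theorem rotationClasses_psi2 {f : Tuple} (hf : Admissible f) (hf₂ : Admissible (psi2 f)) :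
    rotationClasses (psi2 f) = rotationClasses f := by
  have mk_eq {g : Tuple} (hg : Admissible g) (hg₂ : Admissible (psi2 g)) :
      Quot.mk H'Step (psi2 g) = Quot.mk H'Step g := (Quot.sound ⟨hg, hg₂, .inl rfl⟩).symm
  have psi1_psi2 : psi1 (psi2 f) = psi2 (psi1 (psi1 f)) := rfl
  have psi1_psi1_psi2 : psi1 (psi1 (psi2 f)) = psi2 (psi1 f) := rfl
  rw [rotationClasses, psi1_psi1_psi2, psi1_psi2, mk_eq hf hf₂, mk_eq hf.psi1.psi1 hf₂.psi1,
    mk_eq hf.psi1 hf₂.psi1.psi1, Set.pair_comm, rotationClasses]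

theorem rotationClasses_psi3 {f : Tuple} (hf : Admissible f) (hf₃ : Admissible (psi3 f)) :
    rotationClasses (psi3 f) = rotationClasses f := by
  have mk_eq {g : Tuple} (hg : Admissible g) (hg₃ : Admissible (psi3 g)) :
      Quot.mk H'Step (psi3 g) = Quot.mk H'Step g := (Quot.sound ⟨hg, hg₃, .inr rfl⟩).symm
  have psi1_psi3 (g : Tuple) : psi1 (psi3 g) = psi3 (psi1 g) := rfl
  rw [rotationClasses, psi1_psi3, psi1_psi3, mk_eq hf hf₃, mk_eq hf.psi1 hf₃.psi1,
    mk_eq hf.psi1.psi1 hf₃.psi1.psi1, rotationClasses]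

theorem HEquiv.rotationClasses_eq {f g : Tuple} (h : HEquiv f g) :
    rotationClasses f = rotationClasses g := by
  induction h with
  | rel f g h =>
    obtain ⟨hf, hg, rfl | rfl | rfl⟩ := h
    exacts [(rotationClasses_psi1 f).symm, (rotationClasses_psi2 hf hg).symm,
      (rotationClasses_psi3 hf hg).symm]
  | refl f => rfl
  | symm _ _ _ ih => exact ih.symm
  | trans _ _ _ _ _ ih ih' => exact ih.trans ih'

/-- if `f` is `H`-equivalent to `f′`, then `σ(f)` is `H′`-equivalent
to one of `σ(f′)`, `σ(ψ₁(f′))`, `σ(ψ₁²(f′))`. -/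
theorem stmt_12 (f f' : Tuple) (hf : Admissible f) (hf' : Admissible f')
    (h : HEquiv f' f) :
    ∃ e : Fin 3, H'Equiv (sigma (psi1^[e.val] f')) (sigma f) := by
  have hmem : Quot.mk _ f ∈ rotationClasses f' := h.rotationClasses_eq ▸ .inl rfl
  have hrot : ∃ e : Fin 3, H'Equiv (psi1^[e.val] f') f := by
    rcases hmem with h0 | h1 | h2
    exacts [⟨0, Quot.eqvGen_exact h0.symm⟩, ⟨1, Quot.eqvGen_exact h1.symm⟩,
      ⟨2, Quot.eqvGen_exact h2.symm⟩]
  obtain ⟨e, he⟩ := hrot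
  exact ⟨e, he.sigma⟩

end GMN
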